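/- Let (M1, F1) and (M2, F2) be FFA over the same alphabet Σ, with Mi = (Qi, Σ, Ei, Ii). Let P be the NFA with state set (Q1×Q2) ∪ {⊤}, initial states I1×I2, and transitions: (q1,q2) →a (q1',q2') whenever q1 →a q1' in M1 and q2 →a q2' in M2; (q1,q2) →a ⊤ for every q1 ∈ Q1 whenever (q2,a) ∈ F2; and ⊤ →a ⊤ for every a ∈ Σ. Define F on the states of P by ((q1,q2),a) ∈ F iff (q1,a) ∈ F1 and there exists q2' with q2 →a q2' in M2, and (⊤,a) ∉ F for all a. Then F flanks P. -/

import Mathlib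

/-- A nondeterministic finite automaton (all states final). -/
structure NFA' (Q A : Type) where
  E : Q → A → Q → Prop
  I : Set Q

namespace NFA'

variable {Q A : Type}

/-- One step of the automaton on a set of states. -/
def step (M : NFA' Q A) (S : Set Q) (a : A) : Set Q := {q' | ∃ q ∈ S, M.E q a q'}

/-- `M.reach u` is the set of states reached after reading the word `u`
(`M(ε) = I`, `M(u·a) = {q' | ∃ q ∈ M(u), (q,a,q') ∈ E}`). -/
def reach (M : NFA' Q A) (u : List A) : Set Q := u.foldl M.step M.I

/-- The (prefix-closed) language of `M`: words `u` with `M(u) ≠ ∅`. -/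
def lang (M : NFA' Q A) : Set (List A) := {u | (M.reach u).Nonempty}

/-- `F` flanks `M`: for all words `u` and symbols `a`,
`u ∈ L(M) ∧ u·a ∉ L(M)` iff some state of `M(u)` forbids `a`. -/
def Flanks (M : NFA' Q A) (F : Q → A → Prop) : Prop :=
  ∀ (u : List A) (a : A),
    (u ∈ M.lang ∧ u ++ [a] ∉ M.lang) ↔ ∃ q ∈ M.reach u, F q a

end NFA'

/-- Quotient construction for two FFA, with a sink state `⊤` (encoded as `none`):
`(q1,q2) →a (q1',q2')` when `q1 →a q1'` and `q2 →a q2'`; `(q1,q2) →a ⊤` when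
`(q2,a) ∈ F2`; and `⊤ →a ⊤` for every `a`. -/
def quotAut {Q1 Q2 A : Type} (M1 : NFA' Q1 A) (M2 : NFA' Q2 A)
    (F2 : Q2 → A → Prop) : NFA' (Option (Q1 × Q2)) A where
  E s a s' :=
    (∃ q1 q2 q1' q2', s = some (q1, q2) ∧ s' = some (q1', q2') ∧
        M1.E q1 a q1' ∧ M2.E q2 a q2') ∨
    (∃ q1 q2, s = some (q1, q2) ∧ s' = none ∧ F2 q2 a) ∨
    (s = none ∧ s' = none)
  I := {s | ∃ q1 ∈ M1.I, ∃ q2 ∈ M2.I, s = some (q1, q2)}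

theorem reach_snoc {Q A : Type} (M : NFA' Q A) (u : List A) (a : A) :
    M.reach (u ++ [a]) = M.step (M.reach u) a := by
  simp [NFA'.reach]

theorem quot_some {Q1 Q2 A : Type} (M1 : NFA' Q1 A) (M2 : NFA' Q2 A)
    (F2 : Q2 → A → Prop) (u : List A) : ∀ (q1 : Q1) (q2 : Q2),
    some (q1, q2) ∈ (quotAut M1 M2 F2).reach u ↔ q1 ∈ M1.reach u ∧ q2 ∈ M2.reach u := by
  induction u using List.reverseRecOn with
  | nil =>
    intro q1 q2
    simp [NFA'.reach, quotAut]
  | append_singleton u a ih =>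
    intro q1 q2
    rw [reach_snoc, reach_snoc, reach_snoc]
    constructor
    · rintro ⟨s, hs, h⟩
      rcases h with ⟨p1, p2, p1', p2', rfl, he, e1, e2⟩ | ⟨p1, p2, _, he, _⟩ | ⟨_, he⟩
      · cases he
        obtain ⟨r1, r2⟩ := (ih _ _).1 hs
        exact ⟨⟨p1, r1, e1⟩, ⟨p2, r2, e2⟩⟩
      · cases he
      · cases he
    · rintro ⟨⟨p1, r1, e1⟩, ⟨p2, r2, e2⟩⟩
      exact ⟨some (p1, p2), (ih _ _).2 ⟨r1, r2⟩, Or.inl ⟨p1, p2, q1, q2, rfl, rfl, e1, e2⟩⟩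

theorem quot_none {Q1 Q2 A : Type} (M1 : NFA' Q1 A) (M2 : NFA' Q2 A)
    (F2 : Q2 → A → Prop) (h2 : M2.Flanks F2) (u : List A) :
    none ∈ (quotAut M1 M2 F2).reach u → u ∉ M2.lang := by
  induction u using List.reverseRecOn with
  | nil => simp [NFA'.reach, quotAut]
  | append_singleton u a ih =>
    rw [reach_snoc]
    rintro ⟨s, hs, h⟩
    rcases h with ⟨p1, p2, p1', p2', _, he, _⟩ | ⟨p1, p2, rfl, _, hf⟩ | ⟨rfl, _⟩
    · cases he
    · exact ((h2 u a).2 ⟨p2, ((quot_some M1 M2 F2 u p1 p2).1 hs).2, hf⟩).2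
    · rintro ⟨q, hq⟩
      rw [reach_snoc] at hq
      obtain ⟨p, hp, _⟩ := hq
      exact ih hs ⟨p, hp⟩

/-- the quotient construction is flanked by the relation
`((q1,q2),a) ∈ F` iff `(q1,a) ∈ F1` and `q2` has an outgoing `a`-transition
(and `(⊤,a) ∉ F` for all `a`). -/
theorem stmt9 {Q1 Q2 A : Type} [Fintype Q1] [Fintype Q2] [Fintype A]
    (M1 : NFA' Q1 A) (M2 : NFA' Q2 A)
    (F1 : Q1 → A → Prop) (F2 : Q2 → A → Prop)
    (h1 : M1.Flanks F1) (h2 : M2.Flanks F2) :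
    (quotAut M1 M2 F2).Flanks
      (fun s a => ∃ q1 q2, s = some (q1, q2) ∧ F1 q1 a ∧ ∃ q2', M2.E q2 a q2') := by
  intro u a
  constructor
  · rintro ⟨⟨s, hs⟩, hn⟩
    match s, hs with
    | none, hs =>
      exact absurd ⟨none, by rw [reach_snoc]; exact ⟨none, hs, Or.inr (Or.inr ⟨rfl, rfl⟩)⟩⟩ hn
    | some (q1, q2), hs =>
      obtain ⟨r1, r2⟩ := (quot_some M1 M2 F2 u q1 q2).1 hs
      have a2 : u ++ [a] ∈ M2.lang := by
        by_contra hc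
        obtain ⟨p2, hp2, hf⟩ := (h2 u a).1 ⟨⟨q2, r2⟩, hc⟩
        apply hn
        refine ⟨none, ?_⟩
        rw [reach_snoc]
        exact ⟨some (q1, p2), (quot_some M1 M2 F2 u q1 p2).2 ⟨r1, hp2⟩,
          Or.inr (Or.inl ⟨q1, p2, rfl, rfl, hf⟩)⟩
      obtain ⟨p2', hp2'⟩ := a2
      have a1 : u ++ [a] ∉ M1.lang := by
        rintro ⟨p1', hp1'⟩
        exact hn ⟨some (p1', p2'), (quot_some M1 M2 F2 _ _ _).2 ⟨hp1', hp2'⟩⟩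
      obtain ⟨p1, hp1, hf⟩ := (h1 u a).1 ⟨⟨q1, r1⟩, a1⟩
      rw [reach_snoc] at hp2'
      obtain ⟨p2, hp2, e2⟩ := hp2'
      exact ⟨some (p1, p2), (quot_some M1 M2 F2 u p1 p2).2 ⟨hp1, hp2⟩,
        p1, p2, rfl, hf, p2', e2⟩
  · rintro ⟨s, hs, q1, q2, rfl, hf, q2', e2⟩
    obtain ⟨r1, r2⟩ := (quot_some M1 M2 F2 u q1 q2).1 hs
    refine ⟨⟨_, hs⟩, ?_⟩
    rintro ⟨s, hs'⟩
    match s, hs' with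
    | none, hs' =>
      refine quot_none M1 M2 F2 h2 _ hs' ⟨q2', ?_⟩
      rw [reach_snoc]
      exact ⟨q2, r2, e2⟩
    | some (p1, p2), hs' =>
      exact ((h1 u a).2 ⟨q1, r1, hf⟩).2 ⟨p1, ((quot_some M1 M2 F2 _ _ _).1 hs').1⟩
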